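/- Fix an integer r ≥ 3 and let A = exp(πi/(2r)). For all i, j ∈ I = {0, 1, …, r−2}, the sum of Δ_k over all k ∈ I such that the triple (i,j,k) is admissible equals Δ_i · Δ_j. -/

import Mathlib

/-- The variable `A = exp(πi/(2r))`. -/
noncomputable def A (r : ℕ) : ℂ := Complex.exp (Real.pi * Complex.I / (2 * r))

/-- The quantum dimension `Δ_n = (−1)^n (A^{2(n+1)} − A^{−2(n+1)})/(A^2 − A^{−2})`. -/
noncomputable def Δ (r : ℕ) (n : ℕ) : ℂ :=
  (-1) ^ n * (A r ^ (2 * ((n : ℤ) + 1)) - A r ^ (-(2 * ((n : ℤ) + 1)))) /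
    (A r ^ (2 : ℤ) - A r ^ (-2 : ℤ))

/-- A triple `(i,j,k)` of colors in `I = {0,…,r−2}` is *admissible* if
`i ≤ j+k`, `j ≤ i+k`, `k ≤ i+j`, `i+j+k` is even, and `i+j+k ≤ 2(r−2)`. -/
def Admissible (r i j k : ℕ) : Prop :=
  i ≤ r - 2 ∧ j ≤ r - 2 ∧ k ≤ r - 2 ∧
  i ≤ j + k ∧ j ≤ i + k ∧ k ≤ i + j ∧ 2 ∣ (i + j + k) ∧ i + j + k ≤ 2 * (r - 2)

instance (r i j k : ℕ) : Decidable (Admissible r i j k) := by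
  unfold Admissible; infer_instance

/-!
The quantum dimensions are values of rescaled Chebyshev polynomials of the second kind: with
`δ = -A² - A⁻²` one has `Δ_n = S_n(δ)`. The addition formula
`S_{m+n} = S_m S_n - S_{m-1} S_{n-1}` makes `S_m + S_{m+2} + ⋯ + S_{m+2n}` telescope to
`S_{m+n} S_n`. For `j ≤ i` the `k` with `(i,j,k)` admissible are `i-j, i-j+2, …, i-j+2n`, where `n`
is the smaller of `j` and `r-2-i`. If `n = j`, the sum is `S_i S_j`. If `n = r-2-i`, it is
`S_{r-2-j} S_{r-2-i}`, and `S_{r-1}(δ) = 0` gives the reflection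
`S_{r-2-n}(δ) = ± S_n(δ)` with a sign independent of `n`.
-/

open Polynomial Polynomial.Chebyshev

section Chebyshev

variable {R : Type*} [CommRing R]

theorem chebyshev_S_add (m n : ℤ) :
    S R (m + n) = S R m * S R n - S R (m - 1) * S R (n - 1) := by
  induction n using Polynomial.Chebyshev.induct with
  | zero => simp
  | one => simp [S_add_one, mul_comm]
  | add_two n ih₁ ih₀ =>
    have hmn := S_add_two R (m + n)
    have hn := S_add_two R (n : ℤ)
    have hn' := S_add_one R (n : ℤ)
    linear_combination (norm := ring_nf)
      hmn + X * ih₁ - ih₀ - S R m * hn + S R (m - 1) * hn'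
  | neg_add_one n ih₀ ih₁ =>
    have hmn := S_sub_one R (m + -n)
    have hn := S_sub_one R (-n : ℤ)
    have hn' := S_sub_two R (-n : ℤ)
    linear_combination (norm := ring_nf)
      hmn + X * ih₀ - ih₁ - S R m * hn + S R (m - 1) * hn'

theorem sum_chebyshev_S_add_two_mul (m : ℤ) (n : ℕ) :
    ∑ t ∈ Finset.range (n + 1), S R (m + 2 * t) = S R (m + n) * S R n := by
  induction n with
  | zero => simp
  | succ n ih =>
    have hadd := chebyshev_S_add (R := R) (m + n + 1) (n + 1)
    rw [Finset.sum_range_succ, ih]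
    push_cast
    linear_combination (norm := ring_nf) hadd

variable {x : R} {N : ℤ}

theorem eval_chebyshev_S_sub (hx : (S R (N + 1)).eval x = 0) (n : ℤ) :
    (S R (N - n)).eval x = (S R N).eval x * (S R n).eval x := by
  have hadd : S R (N - n) = S R (N + 1) * S R (-n - 1) + S R N * S R n := by
    have h := chebyshev_S_add (R := R) (N + 1) (-n - 1)
    rwa [show N + 1 + (-n - 1) = N - n by ring, show -n - 1 - 1 = -n - 2 by ring,
      add_sub_cancel_right, S_neg_sub_two, mul_neg, sub_neg_eq_add] at h
  simp [hadd, hx]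

theorem eval_chebyshev_S_sub_mul_eval_chebyshev_S_sub (hx : (S R (N + 1)).eval x = 0) (m n : ℤ) :
    (S R (N - m)).eval x * (S R (N - n)).eval x = (S R m).eval x * (S R n).eval x := by
  have hsq : (S R N).eval x * (S R N).eval x = 1 := by
    simpa using (eval_chebyshev_S_sub hx N).symm
  rw [eval_chebyshev_S_sub hx, eval_chebyshev_S_sub hx]
  linear_combination (S R m).eval x * (S R n).eval x * hsq

end Chebyshev

section QuantumInteger

variable {K : Type*} [Field K] {q : K}

theorem zpow_add_one_add_zpow_sub_one (hq : q ≠ 0) (n : ℤ) :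
    q ^ (n + 1) + q ^ (n - 1) = (q + q⁻¹) * q ^ n := by
  rw [zpow_add_one₀ hq, zpow_sub_one₀ hq]
  ring

theorem eval_chebyshev_S_add_inv_mul_sub_inv (hq : q ≠ 0) (n : ℤ) :
    (S K n).eval (q + q⁻¹) * (q - q⁻¹) = q ^ (n + 1) - q ^ (-(n + 1)) := by
  induction n using Polynomial.Chebyshev.induct with
  | zero => simp
  | one =>
    simp only [S_one, eval_X, zpow_neg, one_add_one_eq_two, zpow_ofNat]
    ring
  | add_two n ih₁ ih₀ =>
    have hrec := zpow_add_one_add_zpow_sub_one hq (n + 2)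
    have hrec' := zpow_add_one_add_zpow_sub_one hq (-(n + 2))
    simp only [S_add_two, eval_sub, eval_mul, eval_X]
    linear_combination (norm := ring_nf) (q + q⁻¹) * ih₁ - ih₀ - hrec + hrec'
  | neg_add_one n ih₀ ih₁ =>
    have hrec := zpow_add_one_add_zpow_sub_one hq (-n + 1)
    have hrec' := zpow_add_one_add_zpow_sub_one hq (-(-n + 1))
    simp only [S_sub_one, eval_sub, eval_mul, eval_X]
    linear_combination (norm := ring_nf) (q + q⁻¹) * ih₀ - ih₁ - hrec + hrec'

theorem eval_chebyshev_S_add_inv_eq_div (hq : q ≠ 0) (hq' : q ^ 2 ≠ 1) (n : ℤ) :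
    (S K n).eval (q + q⁻¹) = (q ^ (n + 1) - q ^ (-(n + 1))) / (q - q⁻¹) := by
  have hden : q - q⁻¹ ≠ 0 := by
    rwa [sub_ne_zero, Ne, ← mul_eq_one_iff_eq_inv₀ hq, ← sq]
  rw [eq_div_iff hden, eval_chebyshev_S_add_inv_mul_sub_inv hq]

theorem eval_chebyshev_S_add_inv_eq_zero (hq : q ≠ 0) (hq' : q ^ 2 ≠ 1) {n : ℤ}
    (hn : q ^ (2 * (n + 1)) = 1) : (S K n).eval (q + q⁻¹) = 0 := by
  have hzpow : q ^ (n + 1) = q ^ (-(n + 1)) := by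
    rwa [zpow_neg, ← mul_eq_one_iff_eq_inv₀ (zpow_ne_zero _ hq), ← zpow_add₀ hq, ← two_mul]
  rw [eval_chebyshev_S_add_inv_eq_div hq hq', hzpow, sub_self, zero_div]

end QuantumInteger

section Admissible

variable {r i j : ℕ}

theorem admissible_comm {k : ℕ} : Admissible r i j k ↔ Admissible r j i k := by
  unfold Admissible
  omega

theorem filter_admissible_eq_image (hr : 2 ≤ r) (hi : i ≤ r - 2) (hji : j ≤ i) :
    (Finset.range (r - 1)).filter (fun k => Admissible r i j k) =
      (Finset.range (min j (r - 2 - i) + 1)).image (fun t => i - j + 2 * t) := by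
  ext k
  simp only [Finset.mem_filter, Finset.mem_range, Finset.mem_image]
  unfold Admissible
  constructor
  · intro hk
    exact ⟨(k - (i - j)) / 2, by omega, by omega⟩
  · rintro ⟨t, ht, rfl⟩
    omega

variable {R : Type*} [CommRing R] {x : R}

theorem sum_admissible_eval_chebyshev_S (hr : 2 ≤ r) (hi : i ≤ r - 2) (hji : j ≤ i) :
    ∑ k ∈ (Finset.range (r - 1)).filter (fun k => Admissible r i j k), (S R k).eval x =
      (S R (i - j + min j (r - 2 - i) : ℕ)).eval x * (S R (min j (r - 2 - i) : ℕ)).eval x := by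
  rw [filter_admissible_eq_image hr hi hji, Finset.sum_image (fun _ _ _ _ h => by grind),
    ← eval_finsetSum, ← eval_mul]
  push_cast
  rw [sum_chebyshev_S_add_two_mul, Nat.cast_min]

theorem sum_admissible_eval_chebyshev_S_of_le (hr : 2 ≤ r) (hx : (S R (r - 1)).eval x = 0)
    (hi : i ≤ r - 2) (hji : j ≤ i) :
    ∑ k ∈ (Finset.range (r - 1)).filter (fun k => Admissible r i j k), (S R k).eval x =
      (S R i).eval x * (S R j).eval x := by
  rw [sum_admissible_eval_chebyshev_S hr hi hji]
  rcases le_total j (r - 2 - i) with h | h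
  · rw [min_eq_left h, Nat.sub_add_cancel hji]
  · have hx' : (S R ((r - 2 : ℤ) + 1)).eval x = 0 := by
      rwa [show (r - 2 : ℤ) + 1 = r - 1 by ring]
    rw [min_eq_right h, show ((i - j + (r - 2 - i) : ℕ) : ℤ) = r - 2 - j by omega,
      show ((r - 2 - i : ℕ) : ℤ) = r - 2 - i by omega,
      eval_chebyshev_S_sub_mul_eval_chebyshev_S_sub hx', mul_comm]

theorem sum_delta_admissible_general (hr : 2 ≤ r) (hx : (S R (r - 1)).eval x = 0)
    (hi : i ≤ r - 2) (hj : j ≤ r - 2) :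
    ∑ k ∈ (Finset.range (r - 1)).filter (fun k => Admissible r i j k), (S R k).eval x =
      (S R i).eval x * (S R j).eval x := by
  rcases le_total j i with hji | hij
  · exact sum_admissible_eval_chebyshev_S_of_le hr hx hi hji
  · simp_rw [admissible_comm (i := i)]
    rw [sum_admissible_eval_chebyshev_S_of_le hr hx hj hij, mul_comm]

end Admissible

section QuantumDimension

variable {r : ℕ}

/-- The value `δ = -A² - A⁻²` of a loop in the Kauffman bracket, at which the polynomials `S_n`
take the values `Δ_n`; it is written as `q + q⁻¹` with `q = -A²`. -/
noncomputable def loopValue (r : ℕ) : ℂ := -A r ^ 2 + (-A r ^ 2)⁻¹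

theorem isPrimitiveRoot_A (hr : r ≠ 0) : IsPrimitiveRoot (A r) (4 * r) := by
  have h := Complex.isPrimitiveRoot_exp (4 * r) (by omega)
  have hA : A r = Complex.exp (2 * Real.pi * Complex.I / (4 * r : ℕ)) := by
    rw [A]
    congr 1
    push_cast
    field_simp
    ring
  rwa [hA]

theorem neg_A_sq_ne_zero (r : ℕ) : -A r ^ 2 ≠ 0 :=
  neg_ne_zero.mpr (pow_ne_zero 2 (Complex.exp_ne_zero _))

theorem neg_A_sq_sq_ne_one (hr : 2 ≤ r) : (-A r ^ 2) ^ 2 ≠ 1 := by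
  rw [neg_sq, ← pow_mul]
  exact (isPrimitiveRoot_A (by omega)).pow_ne_one_of_pos_of_lt (by norm_num) (by omega)

theorem eval_chebyshev_S_loopValue (hr : 2 ≤ r) (n : ℕ) :
    (S ℂ n).eval (loopValue r) = Δ r n := by
  rw [loopValue,
    eval_chebyshev_S_add_inv_eq_div (neg_A_sq_ne_zero r) (neg_A_sq_sq_ne_one hr), Δ]
  have hpow : (-A r ^ 2) ^ (n + 1 : ℤ) = -((-1) ^ n * A r ^ (2 * ((n : ℤ) + 1))) := by
    rw [neg_eq_neg_one_mul, mul_zpow, zpow_add_one₀ (by norm_num), zpow_natCast, zpow_mul,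
      zpow_ofNat]
    ring
  have hpow_neg : (-A r ^ 2) ^ (-(n + 1) : ℤ) = -((-1) ^ n * A r ^ (-(2 * ((n : ℤ) + 1)))) := by
    rw [zpow_neg, zpow_neg, hpow, inv_neg, mul_inv, ← inv_pow, inv_neg_one]
  have hden : -A r ^ 2 - (-A r ^ 2)⁻¹ = -(A r ^ (2 : ℤ) - A r ^ (-2 : ℤ)) := by
    rw [inv_neg, zpow_neg, zpow_ofNat]
    ring
  rw [hpow, hpow_neg, hden, ← neg_sub', neg_div_neg_eq, ← mul_sub]

theorem eval_chebyshev_S_sub_one_loopValue (hr : 2 ≤ r) :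
    (S ℂ (r - 1)).eval (loopValue r) = 0 := by
  refine eval_chebyshev_S_add_inv_eq_zero (neg_A_sq_ne_zero r) (neg_A_sq_sq_ne_one hr) ?_
  have hpow : (-A r ^ 2) ^ (2 * r) = 1 := by
    rw [(even_two_mul r).neg_pow, ← pow_mul, show 2 * (2 * r) = 4 * r by ring,
      (isPrimitiveRoot_A (by omega)).pow_eq_one]
  rw [sub_add_cancel]
  exact_mod_cast hpow

end QuantumDimension

/-- for all `i, j ∈ I = {0,…,r−2}`, the sum of `Δ_k` over all `k ∈ I` such
that `(i,j,k)` is admissible equals `Δ_i · Δ_j`. -/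
theorem sum_delta_admissible (r : ℕ) (hr : 3 ≤ r) (i j : ℕ)
    (hi : i ≤ r - 2) (hj : j ≤ r - 2) :
    ∑ k ∈ (Finset.range (r - 1)).filter (fun k => Admissible r i j k), Δ r k =
      Δ r i * Δ r j := by
  have hr₂ : 2 ≤ r := by omega
  simpa only [eval_chebyshev_S_loopValue hr₂] using
    sum_delta_admissible_general hr₂ (eval_chebyshev_S_sub_one_loopValue hr₂) hi hj
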